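/- Let S ⊆ ℝⁿ be a nonempty closed set and let μ be a positive Borel measure on ℝⁿ with supp μ = S satisfying the doubling condition μ(Q(x,2r)) ≤ c_μ μ(Q(x,r)) for all x ∈ S, 0 < r ≤ 1/2. Let p ∈ (n,∞), α ∈ (0,1) and ε ∈ (0, 1/4]. Then there exists a constant C ≥ 1 depending only on n, p, ε, α and c_μ such that for every continuous f : S → ℝ: C^{−1} ∫_0^{αε} 𝒜_{p,2α}(f; t : S)_{L_p(μ)}^p t^{−p−1} dt ≤ ∬_{{(x,y) ∈ S×S : ρ_{α,S}(x,y) < ε}} |f(x) − f(y)|^p ρ_{α,S}(x,y)^{n−p} μ(Q(x, ρ_{α,S}(x,y)))^{−2} dμ(x) dμ(y) ≤ C ∫_0^{4ε} 𝒜_{p,α/8}(f; t : S)_{L_p(μ)}^p t^{−p−1} dt. -/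

import Mathlib

/-!
Both inequalities compare, scale by scale, the double integral over pairs `(x, y)` with packings of
porous cubes centred on `∂S`.

Lower bound. If `Q` is `2α`-porous and centred in `S`, the cube of radius `2 r_Q` concentric with
its hole contains `Q`, and its `α`-dilate lies in the hole, so `ρ(x, y) ≤ 2 diam Q` for all `x, y ∈
Q` (`rho_le_of_porous`). The cubes of a packing are disjoint, hence at most one of them contains a
given pair, and doubling bounds `μ(Q(x, ρ))` by a constant times `μ(Q)`: a packing sum at scale `t`
is therefore at most a constant times `t ^ n` times the integral of `|f x - f y| ^ p μ(Q(x, ρ)) ^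
(-2)` over `{ρ ≤ 2t}` (`sum_cubeTerm_le`). Summing over dyadic `t`, a pair `(x, y)` is counted with
weights `t ^ (n - p)` for the scales `t ≥ ρ / 2`; as `p > n` these form a geometric sum of order `ρ
^ (n - p)` (`tsum_kern_le`, `lower_estimate`). Only the superadditivity of the lower integral is
used, so measurability of `ρ` plays no role.

Upper bound. Pairs are split according to the dyadic `d` with `d / 2 ≤ ρ(x, y) < d`. The boundary
point `z` nearest to the centre of an almost optimal cube for `ρ(x, y)` is the centre of an
`α/8`-porous cube of radius `3d/2`, and `x, y` lie within `d` of `z` (`exists_porous_cube`).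
Replacing `z` by a representative of its cell in a grid of mesh `d/2` keeps `x, y` in the cube.
Sorting the cells by their index modulo `8` splits the representatives into `8 ^ n` classes, each
giving a packing by cubes of diameter `3d` (`exists_separated_cover`), while doubling bounds the
integrand by the kernel of the cube (`integrand_le_cubeKernel`). The packing functional at `3d` is
controlled by its integral over `[3d, 4d)`, and for `d = ε 2⁻ʲ` these intervals are disjoint
subsets of `(0, 4ε)` (`upper_estimate`). The interchange of sums and integrals requires measurable
kernels; although `μ` need not be s-finite, cubes of infinite measure contribute zero and the
others only see a finite restriction of `μ`.
-/

open MeasureTheory Metric Set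
open scoped ENNReal

/-- A closed cube `Q(c, r)` in `ℝⁿ` (with the uniform norm): center `c`, radius `r`. -/
structure PCube (n : ℕ) where
  c : Fin n → ℝ
  r : ℝ

namespace PCube

variable {n : ℕ}

/-- The underlying set of the cube. -/
def toSet (Q : PCube n) : Set (Fin n → ℝ) := Metric.closedBall Q.c Q.r

/-- The diameter `2r` of the cube (uniform norm). -/
def diam (Q : PCube n) : ℝ := 2 * Q.r

/-- Dilation `λQ` of the cube about its center. -/
def scale (Q : PCube n) (l : ℝ) : PCube n := ⟨Q.c, l * Q.r⟩

/-- The volume `|Q| = (2r)ⁿ` of the cube. -/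
def vol (Q : PCube n) : ℝ := (2 * Q.r) ^ n

end PCube

/-- Distance between two subsets of `ℝⁿ`. -/
noncomputable def setDist {n : ℕ} (A B : Set (Fin n → ℝ)) : ℝ :=
  sInf (Set.image2 dist A B)

/-- Oscillation `E(f; U)` of `f` on `U`. -/
noncomputable def osc {n : ℕ} (f : (Fin n → ℝ) → ℝ) (U : Set (Fin n → ℝ)) : ℝ :=
  sSup ((fun q : (Fin n → ℝ) × (Fin n → ℝ) => |f q.1 - f q.2|) '' (U ×ˢ U))

/-- `Q` is `α`-porous with respect to `S`. -/
def Porous {n : ℕ} (α : ℝ) (S : Set (Fin n → ℝ)) (Q : PCube n) : Prop :=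
  ∃ Q' : PCube n, 0 < Q'.r ∧ Q'.toSet ⊆ Q.toSet \ S ∧ α * Q.diam ≤ Q'.diam

/-- `‖∇F(x)‖ = max_i |∂F/∂x_i(x)|`. -/
noncomputable def gradNorm {n : ℕ} (F : (Fin n → ℝ) → ℝ) (x : Fin n → ℝ) : ℝ :=
  ‖fun i : Fin n => fderiv ℝ F x (Pi.single i 1)‖

/-- A packing: a finite family of nondegenerate, pairwise disjoint cubes. -/
def IsPacking {n : ℕ} (π : Finset (PCube n)) : Prop :=
  (∀ Q ∈ π, 0 < Q.r) ∧ ∀ Q ∈ π, ∀ Q' ∈ π, Q ≠ Q' → Disjoint Q.toSet Q'.toSet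

/-- All cubes in the family have equal diameter. -/
def EqualDiam {n : ℕ} (π : Finset (PCube n)) : Prop :=
  ∀ Q ∈ π, ∀ Q' ∈ π, Q.r = Q'.r

/-- The functional `A_p(f; t : S)` (via local oscillations). -/
noncomputable def Ap {n : ℕ} (p : ℝ) (f : (Fin n → ℝ) → ℝ) (t : ℝ)
    (S : Set (Fin n → ℝ)) : ℝ≥0∞ :=
  ⨆ π ∈ {π : Finset (PCube n) | IsPacking π ∧ EqualDiam π ∧ (∀ Q ∈ π, Q.c ∈ S) ∧
      ∀ Q ∈ π, Q.diam ≤ t},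
    ENNReal.ofReal ((∑ Q ∈ π, Q.vol * osc f (Q.toSet ∩ S) ^ p) ^ (1 / p))

/-- `𝔸_{p,α}(f; t : S)`: as `A_p` but over `α`-porous packings. -/
noncomputable def ApPorous {n : ℕ} (p α : ℝ) (f : (Fin n → ℝ) → ℝ) (t : ℝ)
    (S : Set (Fin n → ℝ)) : ℝ≥0∞ :=
  ⨆ π ∈ {π : Finset (PCube n) | IsPacking π ∧ EqualDiam π ∧ (∀ Q ∈ π, Q.c ∈ S) ∧
      (∀ Q ∈ π, Q.diam ≤ t) ∧ ∀ Q ∈ π, Porous α S Q},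
    ENNReal.ofReal ((∑ Q ∈ π, Q.vol * osc f (Q.toSet ∩ S) ^ p) ^ (1 / p))

/-- `E(f; Q)_{L_p(μ)}`. -/
noncomputable def oscLp {n : ℕ} (μ : Measure (Fin n → ℝ)) (p : ℝ) (f : (Fin n → ℝ) → ℝ)
    (Q : PCube n) : ℝ≥0∞ :=
  ((μ Q.toSet)⁻¹ ^ 2 *
    ∫⁻ x in Q.toSet, ∫⁻ y in Q.toSet, ENNReal.ofReal (|f x - f y| ^ p) ∂μ ∂μ) ^ (1 / p)

/-- `A_p(f; t : S)_{L_p(μ)}`. -/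
noncomputable def ApLp {n : ℕ} (μ : Measure (Fin n → ℝ)) (p : ℝ) (f : (Fin n → ℝ) → ℝ)
    (t : ℝ) (S : Set (Fin n → ℝ)) : ℝ≥0∞ :=
  ⨆ π ∈ {π : Finset (PCube n) | IsPacking π ∧ EqualDiam π ∧ (∀ Q ∈ π, Q.c ∈ S) ∧
      ∀ Q ∈ π, Q.diam ≤ t},
    (∑ Q ∈ π, ENNReal.ofReal Q.vol * oscLp μ p f Q ^ p) ^ (1 / p)

/-- `𝒜_{p,α}(f; t : S)_{L_p(μ)}`: over `α`-porous packings centered at the boundary of `S`. -/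
noncomputable def AcalLp {n : ℕ} (μ : Measure (Fin n → ℝ)) (p α : ℝ) (f : (Fin n → ℝ) → ℝ)
    (t : ℝ) (S : Set (Fin n → ℝ)) : ℝ≥0∞ :=
  ⨆ π ∈ {π : Finset (PCube n) | IsPacking π ∧ EqualDiam π ∧ (∀ Q ∈ π, Q.c ∈ frontier S) ∧
      (∀ Q ∈ π, Q.diam ≤ t) ∧ ∀ Q ∈ π, Porous α S Q},
    (∑ Q ∈ π, ENNReal.ofReal Q.vol * oscLp μ p f Q ^ p) ^ (1 / p)

/-- `ρ_{α,S}(x,y) ∈ [0,∞]`. -/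
noncomputable def rho {n : ℕ} (α : ℝ) (S : Set (Fin n → ℝ)) (x y : Fin n → ℝ) : ℝ≥0∞ :=
  sInf {d : ℝ≥0∞ | ∃ Q : PCube n, 0 < Q.r ∧ x ∈ Q.toSet ∧ y ∈ Q.toSet ∧
    (Q.scale α).toSet ⊆ Sᶜ ∧ d = ENNReal.ofReal Q.diam}

/-- The sharp maximal function `f^♯_{∞,S}`. -/
noncomputable def sharpMax {n : ℕ} (S : Set (Fin n → ℝ)) (f : (Fin n → ℝ) → ℝ)
    (x : Fin n → ℝ) : ℝ :=
  sSup {v : ℝ | ∃ r : ℝ, 0 < r ∧ ∃ y ∈ Metric.closedBall x r ∩ S,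
    ∃ z ∈ Metric.closedBall x r ∩ S, v = |f y - f z| / r}

/-- `supp μ = S`. -/
def IsSuppOn {n : ℕ} (μ : Measure (Fin n → ℝ)) (S : Set (Fin n → ℝ)) : Prop :=
  μ Sᶜ = 0 ∧ ∀ x ∈ S, ∀ r : ℝ, 0 < r → 0 < μ (Metric.closedBall x r)

/-- The doubling condition (1.12). -/
def Doubling {n : ℕ} (μ : Measure (Fin n → ℝ)) (S : Set (Fin n → ℝ)) (cμ : ℝ) : Prop :=
  ∀ x ∈ S, ∀ r : ℝ, 0 < r → r ≤ 1 / 2 →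
    μ (Metric.closedBall x (2 * r)) ≤ ENNReal.ofReal cμ * μ (Metric.closedBall x r)

/-- Condition `(D_n)` (1.11). -/
def CondDn {n : ℕ} (μ : Measure (Fin n → ℝ)) (S : Set (Fin n → ℝ)) (Cμ : ℝ) : Prop :=
  ∀ x ∈ S, ∀ r : ℝ, 0 < r → r ≤ 1 → ∀ k : ℝ, 1 ≤ k → k ≤ 1 / r →
    μ (Metric.closedBall x (k * r)) ≤ ENNReal.ofReal (Cμ * k ^ n) * μ (Metric.closedBall x r)

/-- The normalization condition (1.13). -/
def Normalized {n : ℕ} (μ : Measure (Fin n → ℝ)) (S : Set (Fin n → ℝ)) (C' C'' : ℝ) : Prop :=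
  ∀ x ∈ S, ENNReal.ofReal C' ≤ μ (Metric.closedBall x 1) ∧
    μ (Metric.closedBall x 1) ≤ ENNReal.ofReal C''

/-- The double integral over `{‖x−y‖ < t}` (before taking the `1/p` power). -/
noncomputable def I1 {n : ℕ} (μ : Measure (Fin n → ℝ)) (p : ℝ) (S : Set (Fin n → ℝ))
    (f : (Fin n → ℝ) → ℝ) (t : ℝ) : ℝ≥0∞ :=
  ∫⁻ x in S, ∫⁻ y in S,
    ({y : Fin n → ℝ | dist x y < t}.indicator
      (fun y => ENNReal.ofReal (|f x - f y| ^ p) * ENNReal.ofReal (t ^ ((n : ℝ) - p)) *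
        ((μ (Metric.closedBall x t))⁻¹) ^ 2)) y ∂μ ∂μ

/-- The double integral over `{ρ_{α,S}(x,y) < δ}` (before taking the `1/p` power). -/
noncomputable def I2 {n : ℕ} (μ : Measure (Fin n → ℝ)) (p α : ℝ) (S : Set (Fin n → ℝ))
    (f : (Fin n → ℝ) → ℝ) (δ : ℝ) : ℝ≥0∞ :=
  ∫⁻ x in S, ∫⁻ y in S,
    ({y : Fin n → ℝ | rho α S x y < ENNReal.ofReal δ}.indicator
      (fun y => ENNReal.ofReal (|f x - f y| ^ p) * rho α S x y ^ ((n : ℝ) - p) *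
        ((μ (Metric.closedBall x (rho α S x y).toReal))⁻¹) ^ 2)) y ∂μ ∂μ

/-! ### Superadditivity of the lower integral -/

lemma sum_lintegral_le {X ι : Type*} [MeasurableSpace X] (μ : Measure X) (s : Finset ι)
    (g : ι → X → ℝ≥0∞) : ∑ i ∈ s, ∫⁻ x, g i x ∂μ ≤ ∫⁻ x, ∑ i ∈ s, g i x ∂μ := by
  classical
  induction s using Finset.induction_on with
  | empty => simp
  | insert a s ha ih =>
    simp only [Finset.sum_insert ha]
    exact (add_le_add le_rfl ih).trans (le_lintegral_add _ _)

lemma tsum_lintegral_le {X ι : Type*} [MeasurableSpace X] (μ : Measure X)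
    (g : ι → X → ℝ≥0∞) : ∑' i, ∫⁻ x, g i x ∂μ ≤ ∫⁻ x, ∑' i, g i x ∂μ := by
  rw [ENNReal.tsum_eq_iSup_sum]
  exact iSup_le fun s => (sum_lintegral_le μ s g).trans
    (lintegral_mono fun _ => ENNReal.sum_le_tsum s)

lemma sum_lintegral_lintegral_le {X ι : Type*} [MeasurableSpace X] (μ : Measure X) (s : Finset ι)
    (g : ι → X → X → ℝ≥0∞) :
    ∑ i ∈ s, ∫⁻ x, ∫⁻ y, g i x y ∂μ ∂μ ≤ ∫⁻ x, ∫⁻ y, ∑ i ∈ s, g i x y ∂μ ∂μ :=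
  (sum_lintegral_le μ s _).trans (lintegral_mono fun _ => sum_lintegral_le μ s _)

lemma tsum_lintegral_lintegral_le {X ι : Type*} [MeasurableSpace X] (μ : Measure X)
    (g : ι → X → X → ℝ≥0∞) :
    ∑' i, ∫⁻ x, ∫⁻ y, g i x y ∂μ ∂μ ≤ ∫⁻ x, ∫⁻ y, ∑' i, g i x y ∂μ ∂μ :=
  (tsum_lintegral_le μ _).trans (lintegral_mono fun _ => tsum_lintegral_le μ _)

lemma const_mul_lintegral_lintegral_le {X : Type*} [MeasurableSpace X] (μ : Measure X)
    (a : ℝ≥0∞) (g : X → X → ℝ≥0∞) :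
    a * ∫⁻ x, ∫⁻ y, g x y ∂μ ∂μ ≤ ∫⁻ x, ∫⁻ y, a * g x y ∂μ ∂μ :=
  (lintegral_const_mul_le a _).trans (lintegral_mono fun _ => lintegral_const_mul_le a _)

lemma setLIntegral_setLIntegral_eq {X : Type*} [MeasurableSpace X] (μ : Measure X)
    {Q : Set X} (hQ : MeasurableSet Q) (g : X → X → ℝ≥0∞) :
    ∫⁻ x in Q, ∫⁻ y in Q, g x y ∂μ ∂μ =
      ∫⁻ x, ∫⁻ y, (Q ×ˢ Q).indicator (fun q => g q.1 q.2) (x, y) ∂μ ∂μ := by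
  rw [← lintegral_indicator hQ]
  refine lintegral_congr fun x => ?_
  by_cases hx : x ∈ Q
  · rw [Set.indicator_of_mem hx, ← lintegral_indicator hQ]
    refine lintegral_congr fun y => ?_
    by_cases hy : y ∈ Q <;> simp [hx, hy]
  · simp [hx]

/-! ### Dyadic sums -/

lemma sum_range_rpow_le {q T : ℝ} (hq : 0 < q) (hT : 0 < T) (m : ℕ) :
    ∑ k ∈ Finset.range (m + 1), (T * 2⁻¹ ^ k) ^ (-q)
      ≤ (1 - 2 ^ (-q))⁻¹ * (T * 2⁻¹ ^ m) ^ (-q) := by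
  have h2 : (2 : ℝ) ^ (-q) < 1 := Real.rpow_lt_one_of_one_lt_of_neg (by norm_num) (by linarith)
  have h2p : (0 : ℝ) < 2 ^ (-q) := by positivity
  have hne : (1 - 2 ^ (-q) : ℝ) ≠ 0 := by linarith
  induction m with
  | zero =>
    simp only [zero_add, Finset.range_one, Finset.sum_singleton]
    have : 1 ≤ (1 - (2 : ℝ) ^ (-q))⁻¹ := (one_le_inv₀ (by linarith)).2 (by linarith)
    have h0 : (0 : ℝ) ≤ (T * 2⁻¹ ^ 0) ^ (-q) := by positivity
    nlinarith
  | succ m ih =>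
    rw [Finset.sum_range_succ]
    have e : (T * 2⁻¹ ^ m) ^ (-q) = 2 ^ (-q) * (T * 2⁻¹ ^ (m + 1)) ^ (-q) := by
      rw [← Real.mul_rpow (by norm_num) (by positivity)]
      congr 1
      rw [pow_succ]; ring
    rw [e] at ih
    refine (add_le_add ih le_rfl).trans (le_of_eq ?_)
    field_simp
    ring

/-- The terms with `s ≤ 2u`, `u = T 2⁻ᵏ`, form a geometric sum dominated by the one for which `u`
is the smallest. -/
lemma sum_range_ite_rpow_le {q T s : ℝ} (hq : 0 < q) (hT : 0 < T) (hs : 0 < s) (m : ℕ) :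
    ∑ k ∈ Finset.range m, (if s ≤ 2 * (T * 2⁻¹ ^ k) then (T * 2⁻¹ ^ k) ^ (-q) else 0)
      ≤ (1 - 2 ^ (-q))⁻¹ * 2 ^ q * s ^ (-q) := by
  have h2 : (2 : ℝ) ^ (-q) < 1 := Real.rpow_lt_one_of_one_lt_of_neg (by norm_num) (by linarith)
  have hK : 0 < (1 - (2 : ℝ) ^ (-q))⁻¹ := inv_pos.2 (by linarith)
  induction m with
  | zero => simp only [Finset.range_zero, Finset.sum_empty]; positivity
  | succ m ih =>
    by_cases h : s ≤ 2 * (T * 2⁻¹ ^ m)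
    · calc _ ≤ ∑ k ∈ Finset.range (m + 1), (T * 2⁻¹ ^ k) ^ (-q) := by
            refine Finset.sum_le_sum fun k _ => ?_
            split_ifs
            · exact le_rfl
            · positivity
        _ ≤ (1 - 2 ^ (-q))⁻¹ * (T * 2⁻¹ ^ m) ^ (-q) := sum_range_rpow_le hq hT m
        _ ≤ _ := by
            rw [mul_assoc]
            refine mul_le_mul_of_nonneg_left ?_ hK.le
            have : (2 : ℝ) ^ q * s ^ (-q) = (s / 2) ^ (-q) := by
              rw [Real.div_rpow hs.le (by norm_num), Real.rpow_neg (by norm_num : (0:ℝ) ≤ 2)]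
              field_simp
            rw [this]
            exact Real.rpow_le_rpow_of_nonpos (by positivity) (by linarith) (by linarith)
    · rw [Finset.sum_range_succ, if_neg h, add_zero]
      exact ih

lemma tsum_ite_ofReal_rpow_le {q T s : ℝ} (hq : 0 < q) (hT : 0 < T) (hs : 0 < s) :
    ∑' k : ℕ, (if s ≤ 2 * (T * 2⁻¹ ^ k) then ENNReal.ofReal ((T * 2⁻¹ ^ k) ^ (-q)) else 0)
      ≤ ENNReal.ofReal ((1 - 2 ^ (-q))⁻¹ * 2 ^ q) * ENNReal.ofReal (s ^ (-q)) := by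
  have h2 : (2 : ℝ) ^ (-q) < 1 := Real.rpow_lt_one_of_one_lt_of_neg (by norm_num) (by linarith)
  have hK : 0 < (1 - (2 : ℝ) ^ (-q))⁻¹ := inv_pos.2 (by linarith)
  rw [← ENNReal.ofReal_mul (by positivity)]
  refine ENNReal.tsum_le_of_sum_range_le fun m => ?_
  refine le_trans (le_of_eq ?_) (ENNReal.ofReal_le_ofReal (sum_range_ite_rpow_le hq hT hs m))
  rw [ENNReal.ofReal_sum_of_nonneg]
  · refine Finset.sum_congr rfl fun k _ => ?_
    split_ifs <;> simp
  · intro k _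
    split_ifs
    · positivity
    · exact le_rfl

lemma iUnion_dyadic {T : ℝ} (hT : 0 < T) :
    Set.Ioo (0 : ℝ) T ⊆ ⋃ k : ℕ, Set.Ico (T * 2⁻¹ ^ (k + 1)) (T * 2⁻¹ ^ k) := by
  intro t ht
  obtain ⟨k, hk1, hk2⟩ := exists_nat_pow_near_of_lt_one (x := t / T) (y := 2⁻¹)
    (by have := ht.1; positivity) (by rw [div_le_one hT]; exact ht.2.le) (by norm_num) (by norm_num)
  rw [lt_div_iff₀ hT] at hk1
  rw [div_le_iff₀ hT] at hk2
  rw [Set.mem_iUnion]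
  rcases hk2.lt_or_eq with h | h
  · exact ⟨k, by rw [mul_comm]; exact hk1.le, by rw [mul_comm]; exact h⟩
  · have hk0 : k ≠ 0 := by
      rintro rfl
      simp at h
      exact ht.2.ne h
    obtain ⟨j, rfl⟩ := Nat.exists_eq_succ_of_ne_zero hk0
    refine ⟨j, by rw [mul_comm]; exact h.ge, ?_⟩
    rw [h, mul_comm, pow_succ]
    have : 0 < T * 2⁻¹ ^ j := by positivity
    nlinarith


/-! ### The functional `AcalLp` as a supremum of sums -/

/-- The packings over which the supremum in `AcalLp` is taken. -/
def Admissible {n : ℕ} (α t : ℝ) (S : Set (Fin n → ℝ)) (π : Finset (PCube n)) : Prop :=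
  IsPacking π ∧ EqualDiam π ∧ (∀ Q ∈ π, Q.c ∈ frontier S) ∧
    (∀ Q ∈ π, Q.diam ≤ t) ∧ ∀ Q ∈ π, Porous α S Q

/-- The contribution `|Q| E(f; Q)^p` of one cube, in expanded form. -/
noncomputable def cubeTerm {n : ℕ} (μ : Measure (Fin n → ℝ)) (p : ℝ) (f : (Fin n → ℝ) → ℝ)
    (Q : PCube n) : ℝ≥0∞ :=
  ENNReal.ofReal Q.vol * ((μ Q.toSet)⁻¹ ^ 2 *
    ∫⁻ x in Q.toSet, ∫⁻ y in Q.toSet, ENNReal.ofReal (|f x - f y| ^ p) ∂μ ∂μ)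

/-- The weighted kernel of a single cube `Q`, supported on `Q × Q`. -/
noncomputable def cubeKernel {n : ℕ} (μ : Measure (Fin n → ℝ)) (p : ℝ) (f : (Fin n → ℝ) → ℝ)
    (Q : PCube n) (x y : Fin n → ℝ) : ℝ≥0∞ :=
  (ENNReal.ofReal Q.vol * (μ Q.toSet)⁻¹ ^ 2) * (Q.toSet ×ˢ Q.toSet).indicator
      (fun q => ENNReal.ofReal (|f q.1 - f q.2| ^ p)) (x, y)

lemma rpow_one_div_rpow {p : ℝ} (hp : 0 < p) (a : ℝ≥0∞) : (a ^ (1 / p)) ^ p = a := by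
  rw [← ENNReal.rpow_mul, one_div_mul_cancel hp.ne', ENNReal.rpow_one]

lemma vol_mul_oscLp_rpow {n : ℕ} (μ : Measure (Fin n → ℝ)) {p : ℝ} (hp : 0 < p)
    (f : (Fin n → ℝ) → ℝ) (Q : PCube n) :
    ENNReal.ofReal Q.vol * oscLp μ p f Q ^ p = cubeTerm μ p f Q := by
  rw [oscLp, rpow_one_div_rpow hp, cubeTerm]

lemma AcalLp_rpow_le {n : ℕ} {μ : Measure (Fin n → ℝ)} {p α t : ℝ} (hp : 0 < p)
    {f : (Fin n → ℝ) → ℝ} {S : Set (Fin n → ℝ)} {B : ℝ≥0∞}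
    (h : ∀ π, Admissible α t S π → ∑ Q ∈ π, cubeTerm μ p f Q ≤ B) :
    AcalLp μ p α f t S ^ p ≤ B := by
  have : AcalLp μ p α f t S ≤ B ^ (1 / p) := by
    refine iSup₂_le fun π hπ => ENNReal.rpow_le_rpow ?_ (by positivity)
    simp only [vol_mul_oscLp_rpow μ hp]
    exact h π hπ
  calc _ ≤ (B ^ (1 / p)) ^ p := ENNReal.rpow_le_rpow this hp.le
    _ = B := rpow_one_div_rpow hp B

lemma sum_le_AcalLp_rpow {n : ℕ} {μ : Measure (Fin n → ℝ)} {p α t : ℝ} (hp : 0 < p)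
    {f : (Fin n → ℝ) → ℝ} {S : Set (Fin n → ℝ)} {π : Finset (PCube n)}
    (h : Admissible α t S π) :
    ∑ Q ∈ π, cubeTerm μ p f Q ≤ AcalLp μ p α f t S ^ p := by
  rw [← rpow_one_div_rpow hp (∑ Q ∈ π, cubeTerm μ p f Q)]
  refine ENNReal.rpow_le_rpow ?_ hp.le
  simp only [← vol_mul_oscLp_rpow μ hp]
  exact le_iSup₂ (f := fun (π : Finset (PCube n)) (_ : π ∈ {π : Finset (PCube n) | IsPacking π ∧
      EqualDiam π ∧ (∀ Q ∈ π, Q.c ∈ frontier S) ∧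
      (∀ Q ∈ π, Q.diam ≤ t) ∧ ∀ Q ∈ π, Porous α S Q}) =>
    (∑ Q ∈ π, ENNReal.ofReal Q.vol * oscLp μ p f Q ^ p) ^ (1 / p)) π h

lemma AcalLp_mono {n : ℕ} (μ : Measure (Fin n → ℝ)) (p α : ℝ)
    (f : (Fin n → ℝ) → ℝ) (S : Set (Fin n → ℝ)) {s t : ℝ} (hst : s ≤ t) :
    AcalLp μ p α f s S ≤ AcalLp μ p α f t S := by
  refine biSup_mono fun π hπ => ?_
  exact ⟨hπ.1, hπ.2.1, hπ.2.2.1, fun Q hQ => (hπ.2.2.2.1 Q hQ).trans hst, hπ.2.2.2.2⟩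

/-! ### Consequences of doubling -/

lemma doubling_three {n : ℕ} {μ : Measure (Fin n → ℝ)} {S : Set (Fin n → ℝ)} {c : ℝ}
    (hd : Doubling μ S c) {x : Fin n → ℝ} (hx : x ∈ S) {r : ℝ} (hr : 0 < r) (hr8 : r ≤ 1 / 8) :
    μ (closedBall x (8 * r)) ≤ ENNReal.ofReal c ^ 3 * μ (closedBall x r) := by
  have h1 := hd x hx r hr (by linarith)
  have h2 := hd x hx (2 * r) (by linarith) (by linarith)
  have h3 := hd x hx (2 * (2 * r)) (by linarith) (by linarith)
  have e : 8 * r = 2 * (2 * (2 * r)) := by ring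
  rw [e]
  calc _ ≤ ENNReal.ofReal c * (ENNReal.ofReal c * (ENNReal.ofReal c * μ (closedBall x r))) := by
        refine h3.trans ?_
        gcongr
        refine h2.trans ?_
        gcongr
    _ = _ := by ring

lemma inv_sq_le_of_le_mul {a b C : ℝ≥0∞} (hC0 : C ≠ 0) (hC : C ≠ ∞) (h : a ≤ C * b) :
    b⁻¹ ^ 2 ≤ C ^ 2 * a⁻¹ ^ 2 := by
  rw [← mul_pow]
  gcongr
  have h1 := ENNReal.inv_le_inv.2 h
  rw [ENNReal.mul_inv (Or.inl hC0) (Or.inl hC)] at h1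
  calc b⁻¹ = C * (C⁻¹ * b⁻¹) := by
        rw [← mul_assoc, ENNReal.mul_inv_cancel hC0 hC, one_mul]
    _ ≤ C * a⁻¹ := by gcongr

/-! ### From porous cubes to `rho` -/

lemma PCube.mem_toSet_self {n : ℕ} {Q : PCube n} (hr : 0 < Q.r) : Q.c ∈ Q.toSet :=
  mem_closedBall_self hr.le

lemma PCube.measurableSet_toSet {n : ℕ} (Q : PCube n) : MeasurableSet Q.toSet :=
  isClosed_closedBall.measurableSet

lemma abs_coord_le {n : ℕ} {x c : Fin n → ℝ} {r : ℝ} (h : x ∈ closedBall c r) (i : Fin n) :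
    |x i - c i| ≤ r := by
  rw [mem_closedBall] at h
  exact (Real.dist_eq _ _ ▸ dist_le_pi_dist x c i).trans h

/-- Inclusion of cubes implies the inequality of radii as soon as `n ≠ 0`; here `n ≠ 0` is
witnessed by a coordinate. -/
lemma radius_le_of_subset {n : ℕ} (i : Fin n) {c c' : Fin n → ℝ} {r r' : ℝ} (hr' : 0 ≤ r')
    (h : closedBall c' r' ⊆ closedBall c r) : r' ≤ r := by
  have key : ∀ s : ℝ, |s| = r' → |(c' i + s) - c i| ≤ r := by
    intro s hs
    have hmem : c' + Pi.single i s ∈ closedBall c' r' := by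
      rw [mem_closedBall, dist_eq_norm, add_sub_cancel_left, Pi.norm_single, Real.norm_eq_abs, hs]
    simpa using abs_coord_le (h hmem) i
  have h1 := abs_le.1 (key r' (abs_of_nonneg hr'))
  have h2 := abs_le.1 (key (-r') (by rw [abs_neg, abs_of_nonneg hr']))
  linarith [h1.2, h2.1]

/-- The cube of radius `2 r_Q` concentric with the hole of a `2α`-porous cube `Q` contains `Q`, and
its `α`-dilate lies in the hole, so it competes in the definition of `rho α`. The bound `α ≤ 1/2` comes
from comparing the radii of the hole and of `Q`. -/
lemma rho_le_of_porous {n : ℕ} {α : ℝ} {S : Set (Fin n → ℝ)} {Q : PCube n}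
    (hr : 0 < Q.r) (hc : Q.c ∈ S) (hQ : Porous (2 * α) S Q) :
    α ≤ 1 / 2 ∧ ∀ x ∈ Q.toSet, ∀ y ∈ Q.toSet, rho α S x y ≤ ENNReal.ofReal (4 * Q.r) := by
  obtain ⟨Q', hr', hsub, hdiam⟩ := hQ
  simp only [PCube.diam] at hdiam
  have hc' := hsub (PCube.mem_toSet_self hr')
  have hne : Q'.c ≠ Q.c := fun h => hc'.2 (h ▸ hc)
  obtain ⟨i, -⟩ := Function.ne_iff.1 hne
  have hle : Q'.r ≤ Q.r := radius_le_of_subset i hr'.le fun z hz => (hsub hz).1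
  refine ⟨by nlinarith, fun x hx y hy => ?_⟩
  have hin : ∀ z ∈ Q.toSet, z ∈ closedBall Q'.c (2 * Q.r) := by
    intro z hz
    have h1 : dist z Q.c ≤ Q.r := hz
    have h2 : dist Q'.c Q.c ≤ Q.r := hc'.1
    rw [mem_closedBall]
    linarith [dist_triangle_right z Q'.c Q.c]
  refine sInf_le ⟨⟨Q'.c, 2 * Q.r⟩, by positivity, hin x hx, hin y hy, ?_, ?_⟩
  · intro z hz
    have hz' : dist z Q'.c ≤ α * (2 * Q.r) := hz
    exact (hsub (show dist z Q'.c ≤ Q'.r by linarith)).2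
  · simp only [PCube.diam]
    ring_nf

lemma edist_le_rho {n : ℕ} (α : ℝ) (S : Set (Fin n → ℝ)) (x y : Fin n → ℝ) :
    ENNReal.ofReal (dist x y) ≤ rho α S x y := by
  refine le_sInf ?_
  rintro d ⟨Q, -, hx, hy, -, rfl⟩
  refine ENNReal.ofReal_le_ofReal ?_
  have h1 : dist x Q.c ≤ Q.r := hx
  have h2 : dist y Q.c ≤ Q.r := hy
  simp only [PCube.diam]
  linarith [dist_triangle_right x y Q.c]

lemma rho_pos {n : ℕ} {α : ℝ} {S : Set (Fin n → ℝ)} {x y : Fin n → ℝ} (h : x ≠ y) :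
    0 < rho α S x y :=
  (ENNReal.ofReal_pos.2 (dist_pos.2 h)).trans_le (edist_le_rho α S x y)

/-! ### The lower bound for `I2` -/

/-- The integrand of `I2` without the power of `rho`. -/
noncomputable def kern {n : ℕ} (μ : Measure (Fin n → ℝ)) (p α : ℝ) (S : Set (Fin n → ℝ))
    (f : (Fin n → ℝ) → ℝ) (x y : Fin n → ℝ) : ℝ≥0∞ :=
  ENNReal.ofReal (|f x - f y| ^ p) * ((μ (closedBall x (rho α S x y).toReal))⁻¹) ^ 2

/-- At most one cube of the packing contains a given point `x`, and that cube `Q`, if it contains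
`y` as well, satisfies `rho x y ≤ 4 r_Q`; so the sum over the packing collapses pointwise. -/
lemma sum_cubeTerm_le {n : ℕ} {μ : Measure (Fin n → ℝ)} {p α t c : ℝ}
    (ht : t ≤ 1 / 4) {S : Set (Fin n → ℝ)} (hS : IsClosed S) (hc : 1 ≤ c)
    (hd : Doubling μ S c) (f : (Fin n → ℝ) → ℝ) {π : Finset (PCube n)}
    (hπ : Admissible (2 * α) t S π) :
    ∑ Q ∈ π, cubeTerm μ p f Q ≤ (ENNReal.ofReal c ^ 3) ^ 2 * ENNReal.ofReal (t ^ n) *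
      ∫⁻ x, ∫⁻ y, (if rho α S x y ≤ ENNReal.ofReal (2 * t) then kern μ p α S f x y else 0)
        ∂μ ∂μ := by
  classical
  obtain ⟨⟨hpos, hdisj⟩, -, hcen, hdiam, hpor⟩ := hπ
  have hC0 : ENNReal.ofReal c ^ 3 ≠ 0 := pow_ne_zero _ (ENNReal.ofReal_pos.2 (by linarith)).ne'
  have hC : ENNReal.ofReal c ^ 3 ≠ ∞ := ENNReal.pow_ne_top ENNReal.ofReal_ne_top
  have hCtop : (ENNReal.ofReal c ^ 3) ^ 2 * ENNReal.ofReal (t ^ n) ≠ ∞ :=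
    ENNReal.mul_ne_top (ENNReal.pow_ne_top hC) ENNReal.ofReal_ne_top
  have h1 : ∀ Q : PCube n, cubeTerm μ p f Q ≤ ∫⁻ x, ∫⁻ y, cubeKernel μ p f Q x y ∂μ ∂μ := by
    intro Q
    rw [cubeTerm, ← mul_assoc, setLIntegral_setLIntegral_eq μ
      Q.measurableSet_toSet]
    exact const_mul_lintegral_lintegral_le _ _ _
  have h2 : ∀ x y, ∑ Q ∈ π, cubeKernel μ p f Q x y ≤
      (ENNReal.ofReal c ^ 3) ^ 2 * ENNReal.ofReal (t ^ n) *
        (if rho α S x y ≤ ENNReal.ofReal (2 * t) then kern μ p α S f x y else 0) := by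
    intro x y
    by_cases hex : ∃ Q ∈ π, x ∈ Q.toSet ∧ y ∈ Q.toSet
    · obtain ⟨Q, hQ, hx, hy⟩ := hex
      rw [Finset.sum_eq_single_of_mem Q hQ]
      · have hcS : Q.c ∈ S := hS.frontier_subset (hcen Q hQ)
        have hr := hpos Q hQ
        have hQt : 2 * Q.r ≤ t := hdiam Q hQ
        have hrho := (rho_le_of_porous hr hcS (hpor Q hQ)).2 x hx y hy
        have hrt : rho α S x y ≤ ENNReal.ofReal (2 * t) :=
          hrho.trans (ENNReal.ofReal_le_ofReal (by linarith))
        have hreal : (rho α S x y).toReal ≤ 4 * Q.r :=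
          ENNReal.toReal_le_of_le_ofReal (by positivity) hrho
        have hball : μ (closedBall x (rho α S x y).toReal)
            ≤ ENNReal.ofReal c ^ 3 * μ Q.toSet := by
          refine (measure_mono ?_).trans (doubling_three hd hcS hr (by linarith))
          refine closedBall_subset_closedBall' ?_
          have : dist x Q.c ≤ Q.r := hx
          linarith
        have hinv := inv_sq_le_of_le_mul hC0 hC hball
        have hvol : ENNReal.ofReal Q.vol ≤ ENNReal.ofReal (t ^ n) :=
          ENNReal.ofReal_le_ofReal (pow_le_pow_left₀ (by positivity) hQt n)
        rw [if_pos hrt, cubeKernel, kern]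
        simp only [Set.indicator_of_mem (Set.mk_mem_prod hx hy)]
        calc _ ≤ (ENNReal.ofReal (t ^ n) * ((ENNReal.ofReal c ^ 3) ^ 2 *
                (μ (closedBall x (rho α S x y).toReal))⁻¹ ^ 2)) *
                ENNReal.ofReal (|f x - f y| ^ p) := by gcongr
          _ = _ := by ring
      · intro Q' hQ' hne
        have : x ∉ Q'.toSet := fun h => (Set.disjoint_left.1 (hdisj Q' hQ' Q hQ hne) h) hx
        simp [cubeKernel, this]
    · rw [Finset.sum_eq_zero]
      · exact zero_le
      · intro Q hQ
        have : ¬ (x ∈ Q.toSet ∧ y ∈ Q.toSet) := fun h => hex ⟨Q, hQ, h⟩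
        rw [cubeKernel, Set.indicator_of_notMem (by simpa using this), mul_zero]
  calc _ ≤ ∑ Q ∈ π, ∫⁻ x, ∫⁻ y, cubeKernel μ p f Q x y ∂μ ∂μ := Finset.sum_le_sum fun Q _ => h1 Q
    _ ≤ ∫⁻ x, ∫⁻ y, ∑ Q ∈ π, cubeKernel μ p f Q x y ∂μ ∂μ := sum_lintegral_lintegral_le _ _ _
    _ ≤ ∫⁻ x, ∫⁻ y, (ENNReal.ofReal c ^ 3) ^ 2 * ENNReal.ofReal (t ^ n) *
        (if rho α S x y ≤ ENNReal.ofReal (2 * t) then kern μ p α S f x y else 0) ∂μ ∂μ :=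
      lintegral_mono fun x => lintegral_mono fun y => h2 x y
    _ = _ := by
      rw [← lintegral_const_mul' _ _ hCtop]
      exact lintegral_congr fun x => lintegral_const_mul' _ _ hCtop


lemma rho_rpow_eq {n : ℕ} {p α : ℝ} {S : Set (Fin n → ℝ)} {x y : Fin n → ℝ}
    (h0 : 0 < rho α S x y) (htop : rho α S x y ≠ ∞) :
    rho α S x y ^ ((n : ℝ) - p) = ENNReal.ofReal ((rho α S x y).toReal ^ (-(p - n))) := by
  rw [← ENNReal.ofReal_rpow_of_pos (ENNReal.toReal_pos h0.ne' htop), ENNReal.ofReal_toReal htop,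
    neg_sub]

lemma ae_mem_of_isSuppOn {n : ℕ} {μ : Measure (Fin n → ℝ)} {S : Set (Fin n → ℝ)}
    (h : IsSuppOn μ S) : ∀ᵐ x ∂μ, x ∈ S := by
  rw [ae_iff]
  exact h.1

lemma I2_eq {n : ℕ} {μ : Measure (Fin n → ℝ)} {p α δ : ℝ} {S : Set (Fin n → ℝ)}
    (h : IsSuppOn μ S) (f : (Fin n → ℝ) → ℝ) :
    I2 μ p α S f δ = ∫⁻ x, ∫⁻ y, (if rho α S x y < ENNReal.ofReal δ then
      kern μ p α S f x y * rho α S x y ^ ((n : ℝ) - p) else 0) ∂μ ∂μ := by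
  rw [I2, Measure.restrict_eq_self_of_ae_mem (ae_mem_of_isSuppOn h)]
  refine lintegral_congr fun x => lintegral_congr fun y => ?_
  simp only [Set.indicator_apply, Set.mem_ofPred_eq, kern]
  split_ifs
  · ring
  · rfl

lemma kern_eq_zero {n : ℕ} {μ : Measure (Fin n → ℝ)} {p α : ℝ} (hp : 0 < p)
    {S : Set (Fin n → ℝ)} {f : (Fin n → ℝ) → ℝ} {x y : Fin n → ℝ} (h : f x = f y) :
    kern μ p α S f x y = 0 := by
  simp [kern, h, Real.zero_rpow hp.ne']

/-- Since `p > n`, the scales `T 2⁻ᵏ ≳ rho x y` contribute a geometric sum to the coefficient of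
`kern x y`, comparable with `rho x y ^ (n - p)`. -/
lemma tsum_kern_le {n : ℕ} {μ : Measure (Fin n → ℝ)} {p α T ε : ℝ} (hp : (n : ℝ) < p)
    (hT : 0 < T) (hTε : 2 * T ≤ ε) (S : Set (Fin n → ℝ)) (f : (Fin n → ℝ) → ℝ)
    (x y : Fin n → ℝ) :
    ∑' k : ℕ, ENNReal.ofReal ((T * 2⁻¹ ^ k) ^ (-(p - n))) *
        (if rho α S x y < ENNReal.ofReal (2 * (T * 2⁻¹ ^ k)) then kern μ p α S f x y else 0)
      ≤ ENNReal.ofReal ((1 - 2 ^ (-(p - n)))⁻¹ * 2 ^ (p - n)) *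
        (if rho α S x y < ENNReal.ofReal ε then
          kern μ p α S f x y * rho α S x y ^ ((n : ℝ) - p) else 0) := by
  have hp0 : 0 < p := lt_of_le_of_lt (Nat.cast_nonneg n) hp
  by_cases hf : f x = f y
  · simp [kern_eq_zero hp0 hf]
  have h0 : 0 < rho α S x y := rho_pos (fun h => hf (by rw [h]))
  by_cases hε : rho α S x y < ENNReal.ofReal ε
  · rw [if_pos hε]
    have htop : rho α S x y ≠ ∞ := (hε.trans ENNReal.ofReal_lt_top).ne
    have hs : 0 < (rho α S x y).toReal := ENNReal.toReal_pos h0.ne' htop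
    calc _ ≤ ∑' k : ℕ, kern μ p α S f x y * (if (rho α S x y).toReal ≤ 2 * (T * 2⁻¹ ^ k)
            then ENNReal.ofReal ((T * 2⁻¹ ^ k) ^ (-(p - n))) else 0) := by
          refine ENNReal.tsum_le_tsum fun k => ?_
          by_cases hk : rho α S x y < ENNReal.ofReal (2 * (T * 2⁻¹ ^ k))
          · rw [if_pos hk, if_pos (ENNReal.toReal_le_of_le_ofReal (by positivity) hk.le), mul_comm]
          · rw [if_neg hk, mul_zero]
            exact zero_le
      _ = kern μ p α S f x y * ∑' k : ℕ, (if (rho α S x y).toReal ≤ 2 * (T * 2⁻¹ ^ k)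
            then ENNReal.ofReal ((T * 2⁻¹ ^ k) ^ (-(p - n))) else 0) := ENNReal.tsum_mul_left
      _ ≤ kern μ p α S f x y * (ENNReal.ofReal ((1 - 2 ^ (-(p - n)))⁻¹ * 2 ^ (p - n)) *
            ENNReal.ofReal ((rho α S x y).toReal ^ (-(p - n)))) := by
          gcongr
          exact tsum_ite_ofReal_rpow_le (by linarith) hT hs
      _ = _ := by
          rw [rho_rpow_eq h0 htop]
          ring
  · rw [ENNReal.tsum_eq_zero.2]
    · exact zero_le
    · intro k
      rw [if_neg, mul_zero]
      intro hk
      refine hε (hk.trans_le (ENNReal.ofReal_le_ofReal ?_))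
      have : (2⁻¹ : ℝ) ^ k ≤ 1 := pow_le_one₀ (by norm_num) (by norm_num)
      nlinarith

lemma dyadic_block_le {n : ℕ} {μ : Measure (Fin n → ℝ)} {p α T c : ℝ} (hp : 0 < p)
    (hT : 0 < T) (hT1 : T ≤ 1 / 4) {S : Set (Fin n → ℝ)} (hS : IsClosed S) (hc : 1 ≤ c)
    (hd : Doubling μ S c) (f : (Fin n → ℝ) → ℝ) (k : ℕ) :
    ∫⁻ t in Set.Ico (T * 2⁻¹ ^ (k + 1)) (T * 2⁻¹ ^ k),
        AcalLp μ p (2 * α) f t S ^ p * ENNReal.ofReal (t ^ (-p - 1))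
      ≤ ((ENNReal.ofReal c ^ 3) ^ 2 * ENNReal.ofReal (2 ^ p)) *
        (ENNReal.ofReal ((T * 2⁻¹ ^ k) ^ (-(p - n))) * ∫⁻ x, ∫⁻ y,
          (if rho α S x y < ENNReal.ofReal (2 * (T * 2⁻¹ ^ k)) then kern μ p α S f x y else 0)
            ∂μ ∂μ) := by
  set u : ℝ := T * 2⁻¹ ^ (k + 1) with hu
  have hu0 : 0 < u := by positivity
  have htk : T * 2⁻¹ ^ k = 2 * u := by rw [hu, pow_succ]; ring
  have hT' : 2 * u ≤ 1 / 4 := by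
    rw [← htk]
    have : (2⁻¹ : ℝ) ^ k ≤ 1 := pow_le_one₀ (by norm_num) (by norm_num)
    nlinarith
  rw [htk]
  set J : ℝ≥0∞ := ∫⁻ x, ∫⁻ y,
    (if rho α S x y < ENNReal.ofReal (2 * (2 * u)) then kern μ p α S f x y else 0) ∂μ ∂μ with hJ
  have key : ∀ t ∈ Set.Ico u (2 * u),
      AcalLp μ p (2 * α) f t S ^ p * ENNReal.ofReal (t ^ (-p - 1)) ≤
        (ENNReal.ofReal c ^ 3) ^ 2 * ENNReal.ofReal ((2 * u) ^ n) * J *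
          ENNReal.ofReal (u ^ (-p - 1)) := by
    intro t ht
    have ht0 : 0 < t := hu0.trans_le ht.1
    gcongr ?_ * ?_
    · refine AcalLp_rpow_le hp fun π hπ =>
        (sum_cubeTerm_le (by linarith [ht.2]) hS hc hd f hπ).trans ?_
      refine mul_le_mul' (mul_le_mul' le_rfl ?_) ?_
      · exact ENNReal.ofReal_le_ofReal (pow_le_pow_left₀ ht0.le ht.2.le n)
      · refine lintegral_mono fun x => lintegral_mono fun y => ?_
        by_cases h : rho α S x y ≤ ENNReal.ofReal (2 * t)
        · rw [if_pos h, if_pos]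
          refine h.trans_lt ((ENNReal.ofReal_lt_ofReal_iff (by positivity)).2 ?_)
          linarith [ht.2]
        · simp only [if_neg h]
          exact zero_le
    · exact ENNReal.ofReal_le_ofReal
        (Real.rpow_le_rpow_of_nonpos hu0 ht.1 (by linarith))
  calc _ ≤ ∫⁻ _ in Set.Ico u (2 * u), (ENNReal.ofReal c ^ 3) ^ 2 * ENNReal.ofReal ((2 * u) ^ n) *
          J * ENNReal.ofReal (u ^ (-p - 1)) := setLIntegral_mono' measurableSet_Ico key
    _ = (ENNReal.ofReal c ^ 3) ^ 2 * J * (ENNReal.ofReal ((2 * u) ^ n) *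
          ENNReal.ofReal (u ^ (-p - 1)) * ENNReal.ofReal u) := by
        rw [setLIntegral_const, Real.volume_Ico]
        have : 2 * u - u = u := by ring
        rw [this]
        ring
    _ = (ENNReal.ofReal c ^ 3) ^ 2 * J *
          (ENNReal.ofReal (2 ^ p) * ENNReal.ofReal ((2 * u) ^ (-(p - n)))) := by
        congr 1
        rw [← ENNReal.ofReal_mul (by positivity), ← ENNReal.ofReal_mul (by positivity),
          ← ENNReal.ofReal_mul (by positivity)]
        congr 1
        have e1 : u ^ (-p - 1) * u = u ^ (-p) := by
          rw [← Real.rpow_add_one hu0.ne']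
          congr 1
          ring
        have e2 : (2 * u) ^ (-(p - n)) = (2 * u) ^ n * (2 * u) ^ (-p) := by
          rw [← Real.rpow_natCast, ← Real.rpow_add (by positivity)]
          congr 1
          ring
        rw [mul_assoc, e1, e2, Real.mul_rpow (by norm_num) hu0.le (z := -p),
          Real.rpow_neg (by norm_num : (0:ℝ) ≤ 2)]
        have : (2 : ℝ) ^ p ≠ 0 := by positivity
        field_simp
    _ = _ := by ring

lemma lower_estimate {n : ℕ} {μ : Measure (Fin n → ℝ)} {p α ε c : ℝ} (hp : (n : ℝ) < p)
    (hα0 : 0 < α) (hε0 : 0 < ε) (hε1 : ε ≤ 1 / 4) {S : Set (Fin n → ℝ)} (hS : IsClosed S)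
    (hμ : IsSuppOn μ S) (hc : 1 ≤ c) (hd : Doubling μ S c) (f : (Fin n → ℝ) → ℝ) :
    ∫⁻ t in Set.Ioo (0 : ℝ) (α * ε),
        AcalLp μ p (2 * α) f t S ^ p * ENNReal.ofReal (t ^ (-p - 1))
      ≤ ((ENNReal.ofReal c ^ 3) ^ 2 * ENNReal.ofReal (2 ^ p) *
          ENNReal.ofReal ((1 - 2 ^ (-(p - n)))⁻¹ * 2 ^ (p - n))) * I2 μ p α S f ε := by
  have hp0 : 0 < p := lt_of_le_of_lt (Nat.cast_nonneg n) hp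
  by_cases hα : α ≤ 1 / 2
  · have hT : 0 < α * ε := by positivity
    have hTε : 2 * (α * ε) ≤ ε := by nlinarith
    set T := α * ε
    set A : ℝ≥0∞ := (ENNReal.ofReal c ^ 3) ^ 2 * ENNReal.ofReal (2 ^ p) with hA
    calc _ ≤ ∑' k : ℕ, ∫⁻ t in Set.Ico (T * 2⁻¹ ^ (k + 1)) (T * 2⁻¹ ^ k),
            AcalLp μ p (2 * α) f t S ^ p * ENNReal.ofReal (t ^ (-p - 1)) :=
          (lintegral_mono_set (iUnion_dyadic hT)).trans (lintegral_iUnion_le _ _)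
      _ ≤ ∑' k : ℕ, A * (ENNReal.ofReal ((T * 2⁻¹ ^ k) ^ (-(p - n))) * ∫⁻ x, ∫⁻ y,
            (if rho α S x y < ENNReal.ofReal (2 * (T * 2⁻¹ ^ k)) then kern μ p α S f x y else 0)
            ∂μ ∂μ) :=
          ENNReal.tsum_le_tsum fun k => dyadic_block_le hp0 hT (by linarith) hS hc hd f k
      _ = A * ∑' k : ℕ, (ENNReal.ofReal ((T * 2⁻¹ ^ k) ^ (-(p - n))) * ∫⁻ x, ∫⁻ y,
            (if rho α S x y < ENNReal.ofReal (2 * (T * 2⁻¹ ^ k)) then kern μ p α S f x y else 0)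
            ∂μ ∂μ) := ENNReal.tsum_mul_left
      _ ≤ A * ∑' k : ℕ, ∫⁻ x, ∫⁻ y, ENNReal.ofReal ((T * 2⁻¹ ^ k) ^ (-(p - n))) *
            (if rho α S x y < ENNReal.ofReal (2 * (T * 2⁻¹ ^ k)) then kern μ p α S f x y else 0)
            ∂μ ∂μ := by
          gcongr
          exact const_mul_lintegral_lintegral_le _ _ _
      _ ≤ A * ∫⁻ x, ∫⁻ y, ∑' k : ℕ, ENNReal.ofReal ((T * 2⁻¹ ^ k) ^ (-(p - n))) *
            (if rho α S x y < ENNReal.ofReal (2 * (T * 2⁻¹ ^ k)) then kern μ p α S f x y else 0)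
            ∂μ ∂μ := by
          gcongr
          exact tsum_lintegral_lintegral_le _ _
      _ ≤ A * ∫⁻ x, ∫⁻ y, ENNReal.ofReal ((1 - 2 ^ (-(p - n)))⁻¹ * 2 ^ (p - n)) *
            (if rho α S x y < ENNReal.ofReal ε then
              kern μ p α S f x y * rho α S x y ^ ((n : ℝ) - p) else 0) ∂μ ∂μ := by
          gcongr with x y
          exact tsum_kern_le hp hT hTε S f x y
      _ = _ := by
          rw [I2_eq hμ, mul_assoc A, ← lintegral_const_mul' _ _ ENNReal.ofReal_ne_top]
          congr 1
          exact lintegral_congr fun x => lintegral_const_mul' _ _ ENNReal.ofReal_ne_top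
  · -- no cube centred in `S` is `2α`-porous when `α > 1/2`, so only the empty packing remains
    have hz : ∀ t, AcalLp μ p (2 * α) f t S ^ p = 0 := by
      intro t
      refine le_antisymm (AcalLp_rpow_le hp0 fun π hπ => ?_) zero_le
      rw [Finset.sum_eq_zero]
      intro Q hQ
      exact absurd (rho_le_of_porous (hπ.1.1 Q hQ) (hS.frontier_subset (hπ.2.2.1 Q hQ))
        (hπ.2.2.2.2 Q hQ)).1 hα
    simp [hz]


/-! ### Covering by boundary cubes -/

lemma exists_frontier_nearest {n : ℕ} {S : Set (Fin n → ℝ)} (hS : IsClosed S)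
    (hne : S.Nonempty) {c : Fin n → ℝ} (hc : c ∉ S) :
    ∃ z ∈ frontier S, ∀ x ∈ S, dist c z ≤ dist c x := by
  obtain ⟨z, hz, hdz⟩ := hS.exists_infDist_eq_dist hne c
  refine ⟨z, ⟨subset_closure hz, fun hint => ?_⟩, fun x hx => hdz ▸ infDist_le_dist_of_mem hx⟩
  -- moving from an interior point `z` towards `c` would stay in `S` and come closer to `c`
  have hcz : 0 < dist c z := dist_pos.2 fun h => hc (h ▸ hz)
  have hlim : Filter.Tendsto (fun τ : ℝ => AffineMap.lineMap z c τ) (nhdsWithin 0 (Ioi 0))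
      (nhds z) := by
    have h : Continuous (fun τ : ℝ => (AffineMap.lineMap z c τ : Fin n → ℝ)) :=
      AffineMap.lineMap_continuous
    have h' := (h.tendsto 0).mono_left (nhdsWithin_le_nhds (s := Ioi 0))
    simpa using h'
  have hev := hlim.eventually (isOpen_interior.mem_nhds hint)
  have hev2 : ∀ᶠ τ : ℝ in nhdsWithin 0 (Ioi 0), τ ∈ Ioo (0 : ℝ) 1 :=
    Ioo_mem_nhdsGT one_pos
  obtain ⟨τ, h1, h2⟩ := (hev.and hev2).exists
  have h3 := infDist_le_dist_of_mem (x := c) (interior_subset h1)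
  rw [hdz, dist_right_lineMap, Real.norm_eq_abs, abs_of_pos (by linarith [h2.2]),
    dist_comm z c] at h3
  nlinarith [h2.1]

/-- The boundary point nearest to the centre of an almost optimal cube for `rho` is the centre of
a porous cube of comparable size. -/
lemma exists_porous_cube {n : ℕ} {α d : ℝ} (hα0 : 0 < α) (hα1 : α < 1)
    {S : Set (Fin n → ℝ)} (hS : IsClosed S) {x y : Fin n → ℝ} (hx : x ∈ S)
    (h1 : rho α S x y < ENNReal.ofReal d) (h2 : ENNReal.ofReal (d / 2) ≤ rho α S x y) :
    ∃ z ∈ frontier S, Porous (α / 8) S ⟨z, 3 * d / 2⟩ ∧ dist x z ≤ d ∧ dist y z ≤ d := by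
  obtain ⟨_, ⟨⟨c, k⟩, hk, hxQ, hyQ, hsub, rfl⟩, hlt⟩ := sInf_lt_iff.1 h1
  simp only [PCube.diam, PCube.toSet, PCube.scale, mem_closedBall] at hk hxQ hyQ hsub hlt
  have h2' := (h2.trans (sInf_le ⟨⟨c, k⟩, hk, hxQ, hyQ, hsub, rfl⟩) :
    ENNReal.ofReal (d / 2) ≤ ENNReal.ofReal (2 * k))
  rw [ENNReal.ofReal_le_ofReal_iff (by positivity)] at h2'
  rw [ENNReal.ofReal_lt_ofReal_iff_of_nonneg (by positivity)] at hlt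
  have hcS : c ∉ S := hsub (mem_closedBall_self (by positivity))
  obtain ⟨z, hz, hmin⟩ := exists_frontier_nearest hS ⟨x, hx⟩ hcS
  have hcz : dist c z ≤ k := (hmin x hx).trans (by rw [dist_comm]; exact hxQ)
  refine ⟨z, hz, ⟨⟨c, α * k⟩, by positivity, fun w hw => ⟨?_, hsub hw⟩, ?_⟩, ?_, ?_⟩
  · have hw' : dist w c ≤ α * k := hw
    change dist w z ≤ 3 * d / 2
    nlinarith [dist_triangle w c z]
  · simp only [PCube.diam]
    nlinarith
  · linarith [dist_triangle x c z]
  · linarith [dist_triangle y c z]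

/-- Splitting of `G`, up to an error `d/2`, into finitely many classes of points at mutual distance
greater than `3d`, so that cubes of radius `3d/2` centred in one class are disjoint.
One point of `G` is kept in each cell of a grid of mesh `d/2`, and cells are sorted by the
residue modulo `8` of their index: two kept points of the same class differ by more than `7d/2`
in some coordinate. -/
lemma exists_separated_cover {n : ℕ} {d : ℝ} (hd : 0 < d) (G : Set (Fin n → ℝ)) :
    ∃ F : (Fin n → ZMod 8) → Set (Fin n → ℝ),
      (∀ r, (F r).Countable ∧ F r ⊆ G ∧
        ∀ a ∈ F r, ∀ b ∈ F r, a ≠ b → 3 * d < dist a b) ∧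
      ∀ z ∈ G, ∃ r, ∃ z' ∈ F r, dist z z' ≤ d / 2 := by
  classical
  set cell : (Fin n → ℝ) → (Fin n → ℤ) := fun z i => ⌊2 * z i / d⌋ with hcell
  have hex : ∀ i : (cell '' G), ∃ z ∈ G, cell z = i := fun i => i.2
  choose rep hrep hrepc using hex
  refine ⟨fun r => {a | ∃ i : (cell '' G), rep i = a ∧ ∀ l, ((i : Fin n → ℤ) l : ZMod 8) = r l},
    fun r => ⟨?_, ?_, ?_⟩, ?_⟩
  · refine (countable_range rep).mono ?_
    rintro a ⟨i, rfl, -⟩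
    exact mem_range_self i
  · rintro a ⟨i, rfl, -⟩
    exact hrep i
  · rintro a ⟨i, rfl, hi⟩ b ⟨j, rfl, hj⟩ hne
    have hij : (i : Fin n → ℤ) ≠ j := fun h => hne (congrArg rep (Subtype.ext h))
    obtain ⟨l, hl⟩ := Function.ne_iff.1 hij
    have hmod : ((8 : ℕ) : ℤ) ∣ (i : Fin n → ℤ) l - (j : Fin n → ℤ) l := by
      rw [← ZMod.intCast_zmod_eq_zero_iff_dvd]
      push_cast
      rw [hi, hj, sub_self]
    have habs : 8 ≤ |(i : Fin n → ℤ) l - (j : Fin n → ℤ) l| :=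
      Int.le_of_dvd (abs_pos.2 (sub_ne_zero.2 hl)) ((dvd_abs _ _).2 hmod)
    rw [← hrepc i, ← hrepc j] at habs
    simp only [hcell] at habs
    have hdist : |rep i l - rep j l| ≤ dist (rep i) (rep j) :=
      Real.dist_eq (rep i l) (rep j l) ▸ dist_le_pi_dist _ _ l
    refine lt_of_lt_of_le ?_ hdist
    have a1 := Int.floor_le (2 * rep i l / d)
    have a2 := Int.lt_floor_add_one (2 * rep i l / d)
    have b1 := Int.floor_le (2 * rep j l / d)
    have b2 := Int.lt_floor_add_one (2 * rep j l / d)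
    have habs' : (8 : ℝ) ≤ |(⌊2 * rep i l / d⌋ : ℝ) - ⌊2 * rep j l / d⌋| := by exact_mod_cast habs
    have hsplit : 2 * rep i l / d - 2 * rep j l / d = 2 * (rep i l - rep j l) / d := by ring
    have h7 : 7 < |2 * (rep i l - rep j l) / d| := by
      rw [← hsplit]
      rcases le_abs.1 habs' with h | h
      · exact lt_abs.2 (Or.inl (by linarith))
      · exact lt_abs.2 (Or.inr (by linarith))
    rw [abs_div, abs_of_pos hd, lt_div_iff₀ hd, abs_mul, abs_of_pos (by norm_num : (0:ℝ) < 2)] at h7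
    linarith
  · intro z hz
    refine ⟨fun l => (cell z l : ZMod 8), rep ⟨cell z, mem_image_of_mem _ hz⟩,
      ⟨⟨cell z, mem_image_of_mem _ hz⟩, rfl, fun l => rfl⟩, ?_⟩
    rw [dist_pi_le_iff (by positivity)]
    intro l
    have hc := congrFun (hrepc ⟨cell z, mem_image_of_mem _ hz⟩) l
    set z' := rep ⟨cell z, mem_image_of_mem _ hz⟩
    simp only [hcell] at hc
    have h := Int.abs_sub_lt_one_of_floor_eq_floor hc
    have hsplit : 2 * z' l / d - 2 * z l / d = 2 * (z' l - z l) / d := by ring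
    rw [hsplit, abs_div, abs_of_pos hd, div_lt_one hd, abs_mul,
      abs_of_pos (by norm_num : (0:ℝ) < 2)] at h
    rw [Real.dist_eq, abs_sub_comm]
    linarith

lemma tsum_cubeTerm_le {n : ℕ} {μ : Measure (Fin n → ℝ)} {p α d : ℝ} (hp : 0 < p) (hd : 0 < d)
    (f : (Fin n → ℝ) → ℝ) {S F : Set (Fin n → ℝ)}
    (hF : ∀ z ∈ F, z ∈ frontier S ∧ Porous α S ⟨z, 3 * d / 2⟩)
    (hsep : ∀ a ∈ F, ∀ b ∈ F, a ≠ b → 3 * d < dist a b) :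
    ∑' z : F, cubeTerm μ p f ⟨z, 3 * d / 2⟩ ≤ AcalLp μ p α f (3 * d) S ^ p := by
  classical
  rw [ENNReal.tsum_eq_iSup_sum]
  refine iSup_le fun s => ?_
  let e : F ↪ PCube n := ⟨fun z => ⟨z, 3 * d / 2⟩, fun a b h => Subtype.ext (by
    simpa using congrArg PCube.c h)⟩
  have hsum : ∑ z ∈ s, cubeTerm μ p f ⟨z, 3 * d / 2⟩ = ∑ Q ∈ s.map e, cubeTerm μ p f Q := by
    rw [Finset.sum_map]
    rfl
  rw [hsum]
  have hmem : ∀ Q ∈ s.map e, ∃ z : F, Q = ⟨z, 3 * d / 2⟩ := by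
    intro Q hQ
    obtain ⟨z, -, rfl⟩ := Finset.mem_map.1 hQ
    exact ⟨z, rfl⟩
  refine sum_le_AcalLp_rpow hp ⟨⟨?_, ?_⟩, ?_, ?_, ?_, ?_⟩
  · intro Q hQ
    obtain ⟨z, rfl⟩ := hmem Q hQ
    simp only
    positivity
  · intro Q hQ Q' hQ' hne
    obtain ⟨a, rfl⟩ := hmem Q hQ
    obtain ⟨b, rfl⟩ := hmem Q' hQ'
    refine closedBall_disjoint_closedBall ?_
    have := hsep a a.2 b b.2 (fun h => hne (by rw [h]))
    simp only
    linarith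
  · intro Q hQ Q' hQ'
    obtain ⟨a, rfl⟩ := hmem Q hQ
    obtain ⟨b, rfl⟩ := hmem Q' hQ'
    rfl
  · intro Q hQ
    obtain ⟨a, rfl⟩ := hmem Q hQ
    exact (hF a a.2).1
  · intro Q hQ
    obtain ⟨a, rfl⟩ := hmem Q hQ
    simp only [PCube.diam]
    linarith
  · intro Q hQ
    obtain ⟨a, rfl⟩ := hmem Q hQ
    exact (hF a a.2).2

/-! ### The upper bound for `I2` -/

lemma measurable_cubeKernel {n : ℕ} (μ : Measure (Fin n → ℝ)) (p : ℝ) {f : (Fin n → ℝ) → ℝ}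
    (hf : Measurable f) (Q : PCube n) :
    Measurable (fun q : (Fin n → ℝ) × (Fin n → ℝ) => cubeKernel μ p f Q q.1 q.2) := by
  have h : Measurable (fun q : (Fin n → ℝ) × (Fin n → ℝ) =>
      ENNReal.ofReal (|f q.1 - f q.2| ^ p)) := by fun_prop
  exact (h.indicator (Q.measurableSet_toSet.prod Q.measurableSet_toSet)).const_mul _

/-- `μ` need not be s-finite, but the kernel vanishes when `μ Q = ∞`, and otherwise only the
restriction of `μ` to `Q` matters. -/
lemma measurable_lintegral_cubeKernel {n : ℕ} (μ : Measure (Fin n → ℝ)) (p : ℝ)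
    {f : (Fin n → ℝ) → ℝ} (hf : Measurable f) (Q : PCube n) :
    Measurable (fun x => ∫⁻ y, cubeKernel μ p f Q x y ∂μ) := by
  by_cases h : μ Q.toSet = ∞
  · simp [cubeKernel, h]
  · have : IsFiniteMeasure (μ.restrict Q.toSet) := isFiniteMeasure_restrict.2 h
    have e : ∀ x, ∫⁻ y, cubeKernel μ p f Q x y ∂μ =
        ∫⁻ y, cubeKernel μ p f Q x y ∂(μ.restrict Q.toSet) := by
      intro x
      rw [← lintegral_indicator Q.measurableSet_toSet]
      refine lintegral_congr fun y => ?_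
      by_cases hy : y ∈ Q.toSet <;> simp [cubeKernel, hy]
    simp only [e]
    exact (measurable_cubeKernel μ p hf Q).lintegral_prod_right'

lemma lintegral_lintegral_cubeKernel {n : ℕ} (μ : Measure (Fin n → ℝ)) (p : ℝ)
    (f : (Fin n → ℝ) → ℝ) {Q : PCube n} (w : ℝ≥0∞) (hw : w ≠ ∞) :
    ∫⁻ x, ∫⁻ y, w * cubeKernel μ p f Q x y ∂μ ∂μ = w * cubeTerm μ p f Q := by
  simp only [lintegral_const_mul' _ _ hw]
  congr 1
  by_cases h : μ Q.toSet = ∞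
  · simp [cubeKernel, cubeTerm, h]
  · by_cases h0 : μ Q.toSet = 0
    · -- here `(μ Q)⁻¹ = ∞`, but the double integral over `Q × Q` vanishes
      have hr : μ.restrict Q.toSet = 0 := Measure.restrict_eq_zero.2 h0
      have hk : ∀ x ∉ Q.toSet, ∀ y, cubeKernel μ p f Q x y = 0 := by
        intro x hx y
        simp [cubeKernel, hx]
      have hae : ∀ᵐ x ∂μ, x ∉ Q.toSet := measure_eq_zero_iff_ae_notMem.1 h0
      rw [cubeTerm, hr, lintegral_zero_measure, mul_zero, mul_zero]
      rw [lintegral_congr_ae (g := fun _ => 0) (hae.mono fun x hx => by simp [hk x hx])]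
      simp
    · have ha : ENNReal.ofReal Q.vol * (μ Q.toSet)⁻¹ ^ 2 ≠ ∞ :=
        ENNReal.mul_ne_top ENNReal.ofReal_ne_top
          (ENNReal.pow_ne_top (ENNReal.inv_ne_top.2 h0))
      simp only [cubeKernel, lintegral_const_mul' _ _ ha]
      rw [cubeTerm, setLIntegral_setLIntegral_eq μ Q.measurableSet_toSet, mul_assoc]


/-- Comparison of the integrand of `I2` at `(x, y)`, `rho x y` of order `d`, with the kernel of any
cube of radius `3d/2` containing both points. -/
lemma integrand_le_cubeKernel {n : ℕ} {μ : Measure (Fin n → ℝ)} {p α d c : ℝ} (hp : (n : ℝ) < p)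
    (hd0 : 0 < d) (hd1 : d ≤ 1 / 4) {S : Set (Fin n → ℝ)} (hc : 1 ≤ c) (hd : Doubling μ S c)
    (f : (Fin n → ℝ) → ℝ) {x y z : Fin n → ℝ} (hx : x ∈ S)
    (h1 : rho α S x y < ENNReal.ofReal d) (h2 : ENNReal.ofReal (d / 2) ≤ rho α S x y)
    (hxz : dist x z ≤ 3 * d / 2) (hyz : dist y z ≤ 3 * d / 2) :
    kern μ p α S f x y * rho α S x y ^ ((n : ℝ) - p) ≤
      ((ENNReal.ofReal c ^ 3) ^ 2 * ENNReal.ofReal (2 ^ (p - n)) * ENNReal.ofReal (d ^ (-p))) *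
        cubeKernel μ p f ⟨z, 3 * d / 2⟩ x y := by
  have hC0 : ENNReal.ofReal c ^ 3 ≠ 0 := pow_ne_zero _ (ENNReal.ofReal_pos.2 (by linarith)).ne'
  have hC : ENNReal.ofReal c ^ 3 ≠ ∞ := ENNReal.pow_ne_top ENNReal.ofReal_ne_top
  set Q : PCube n := ⟨z, 3 * d / 2⟩ with hQ
  have htop : rho α S x y ≠ ∞ := (h1.trans ENNReal.ofReal_lt_top).ne
  have h0 : 0 < rho α S x y := (ENNReal.ofReal_pos.2 (by positivity)).trans_le h2
  have hs : d / 2 ≤ (rho α S x y).toReal := (ENNReal.ofReal_le_iff_le_toReal htop).1 h2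
  have hpow : rho α S x y ^ ((n : ℝ) - p) ≤
      ENNReal.ofReal (2 ^ (p - n)) * ENNReal.ofReal (d ^ (-p)) * ENNReal.ofReal Q.vol := by
    rw [rho_rpow_eq h0 htop, ← ENNReal.ofReal_mul (by positivity),
      ← ENNReal.ofReal_mul (by positivity)]
    refine ENNReal.ofReal_le_ofReal ?_
    calc _ ≤ (d / 2) ^ (-(p - n)) :=
          Real.rpow_le_rpow_of_nonpos (by positivity) hs (by linarith)
      _ = 2 ^ (p - n) * d ^ (-p) * d ^ n := by
          rw [Real.div_rpow hd0.le (by norm_num), Real.rpow_neg (by norm_num : (0:ℝ) ≤ 2),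
            ← Real.rpow_natCast d n, mul_assoc, ← Real.rpow_add hd0]
          have : -(p - n) = -p + n := by ring
          rw [this]
          field_simp
      _ ≤ _ := by
          refine mul_le_mul_of_nonneg_left ?_ (by positivity)
          exact pow_le_pow_left₀ hd0.le (by simp only [hQ]; linarith) n
  have hball : μ Q.toSet ≤
      ENNReal.ofReal c ^ 3 * μ (closedBall x (rho α S x y).toReal) := by
    calc μ Q.toSet ≤ μ (closedBall x (8 * (3 * d / 8))) := by
          refine measure_mono (closedBall_subset_closedBall' ?_)
          rw [dist_comm]
          simp only [hQ]
          linarith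
      _ ≤ ENNReal.ofReal c ^ 3 * μ (closedBall x (3 * d / 8)) :=
          doubling_three hd hx (by positivity) (by linarith)
      _ ≤ _ := by
          gcongr
          linarith
  have hinv := inv_sq_le_of_le_mul hC0 hC hball
  have hmem : (x, y) ∈ Q.toSet ×ˢ Q.toSet := ⟨hxz, hyz⟩
  rw [cubeKernel, Set.indicator_of_mem hmem, kern]
  calc _ ≤ ENNReal.ofReal (|f x - f y| ^ p) * ((ENNReal.ofReal c ^ 3) ^ 2 * (μ Q.toSet)⁻¹ ^ 2) *
        (ENNReal.ofReal (2 ^ (p - n)) * ENNReal.ofReal (d ^ (-p)) * ENNReal.ofReal Q.vol) := by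
        gcongr
    _ = _ := by ring

/-- `A(3d)` is controlled by the integral over `[3d, 4d)`, by monotonicity of `A`. -/
lemma rpow_mul_AcalLp_le {n : ℕ} (μ : Measure (Fin n → ℝ)) {p : ℝ} (α : ℝ) {d : ℝ} (hp : 0 < p)
    (hd : 0 < d) (f : (Fin n → ℝ) → ℝ) (S : Set (Fin n → ℝ)) :
    ENNReal.ofReal (d ^ (-p)) * AcalLp μ p α f (3 * d) S ^ p ≤
      ENNReal.ofReal (4 ^ (p + 1)) * ∫⁻ t in Set.Ico (3 * d) (4 * d),
        AcalLp μ p α f t S ^ p * ENNReal.ofReal (t ^ (-p - 1)) := by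
  have key : AcalLp μ p α f (3 * d) S ^ p * ENNReal.ofReal ((4 * d) ^ (-p - 1)) *
      ENNReal.ofReal d ≤ ∫⁻ t in Set.Ico (3 * d) (4 * d),
        AcalLp μ p α f t S ^ p * ENNReal.ofReal (t ^ (-p - 1)) := by
    have e : d = 4 * d - 3 * d := by ring
    calc _ = ∫⁻ _ in Set.Ico (3 * d) (4 * d),
          AcalLp μ p α f (3 * d) S ^ p * ENNReal.ofReal ((4 * d) ^ (-p - 1)) := by
          rw [setLIntegral_const, Real.volume_Ico, ← e]
      _ ≤ _ := by
          refine setLIntegral_mono' measurableSet_Ico fun t ht => ?_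
          have ht0 : 0 < t := by linarith [ht.1]
          gcongr ?_ * ?_
          · exact ENNReal.rpow_le_rpow (AcalLp_mono μ p α f S ht.1) hp.le
          · exact ENNReal.ofReal_le_ofReal
              (Real.rpow_le_rpow_of_nonpos ht0 ht.2.le (by linarith))
  refine le_trans (le_of_eq ?_) (mul_le_mul' le_rfl key)
  have e : d ^ (-p) = 4 ^ (p + 1) * ((4 * d) ^ (-p - 1) * d) := by
    have e1 : d ^ (-p - 1) * d = d ^ (-p) := by
      rw [← Real.rpow_add_one hd.ne']
      congr 1
      ring
    have e2 : (4 : ℝ) ^ (p + 1) * 4 ^ (-p - 1) = 1 := by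
      rw [← Real.rpow_add (by norm_num)]
      have : p + 1 + (-p - 1) = 0 := by ring
      rw [this, Real.rpow_zero]
    rw [Real.mul_rpow (by norm_num) hd.le, ← e1]
    linear_combination (-(d ^ (-p - 1) * d)) * e2
  rw [e, ENNReal.ofReal_mul (by positivity), ENNReal.ofReal_mul (by positivity)]
  ring

lemma tsum_setLIntegral_dyadic_le {ε : ℝ} (hε : 0 < ε) (g : ℝ → ℝ≥0∞) :
    ∑' j : ℕ, ∫⁻ t in Set.Ico (3 * (ε * 2⁻¹ ^ j)) (4 * (ε * 2⁻¹ ^ j)), g t ≤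
      ∫⁻ t in Set.Ioo (0 : ℝ) (4 * ε), g t := by
  rw [← lintegral_iUnion (fun _ => measurableSet_Ico)]
  · refine lintegral_mono_set (iUnion_subset fun j t ht => ⟨?_, ?_⟩)
    · have : 0 < ε * 2⁻¹ ^ j := by positivity
      linarith [ht.1]
    · have : (2⁻¹ : ℝ) ^ j ≤ 1 := pow_le_one₀ (by norm_num) (by norm_num)
      nlinarith [ht.2]
  · refine (pairwise_disjoint_on _).2 fun i j hij => Set.disjoint_left.2 fun t ht ht' => ?_
    have h1 : (2⁻¹ : ℝ) ^ j ≤ 2⁻¹ ^ (i + 1) :=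
      pow_le_pow_of_le_one (by norm_num) (by norm_num) (Nat.succ_le_of_lt hij)
    have h2 : (0 : ℝ) < ε * 2⁻¹ ^ i := by positivity
    have h3 : ε * 2⁻¹ ^ j ≤ ε * 2⁻¹ ^ i / 2 := by
      calc ε * 2⁻¹ ^ j ≤ ε * 2⁻¹ ^ (i + 1) := mul_le_mul_of_nonneg_left h1 hε.le
        _ = ε * 2⁻¹ ^ i / 2 := by rw [pow_succ]; ring
    linarith [ht.1, ht'.2]

lemma upper_estimate {n : ℕ} {μ : Measure (Fin n → ℝ)} {p α ε c : ℝ} (hp : (n : ℝ) < p)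
    (hα0 : 0 < α) (hα1 : α < 1) (hε0 : 0 < ε) (hε1 : ε ≤ 1 / 4) {S : Set (Fin n → ℝ)}
    (hS : IsClosed S) (hμ : IsSuppOn μ S) (hc : 1 ≤ c) (hd : Doubling μ S c)
    {f : (Fin n → ℝ) → ℝ} (hf : Measurable f) :
    I2 μ p α S f ε ≤ ((ENNReal.ofReal c ^ 3) ^ 2 * ENNReal.ofReal (2 ^ (p - n)) * 8 ^ n *
        ENNReal.ofReal (4 ^ (p + 1))) *
      ∫⁻ t in Set.Ioo (0 : ℝ) (4 * ε),
        AcalLp μ p (α / 8) f t S ^ p * ENNReal.ofReal (t ^ (-p - 1)) := by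
  have hp0 : 0 < p := lt_of_le_of_lt (Nat.cast_nonneg n) hp
  set d : ℕ → ℝ := fun j => ε * 2⁻¹ ^ j with hd_def
  have hdpos : ∀ j, 0 < d j := fun j => by simp only [hd_def]; positivity
  have hdle : ∀ j, d j ≤ 1 / 4 := fun j => by
    have : (2⁻¹ : ℝ) ^ j ≤ 1 := pow_le_one₀ (by norm_num) (by norm_num)
    simp only [hd_def]
    nlinarith
  choose F hF hcov using fun j : ℕ => exists_separated_cover (hdpos j)
    {z | z ∈ frontier S ∧ Porous (α / 8) S ⟨z, 3 * d j / 2⟩}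
  have hcount : ∀ j r, Countable (F j r) := fun j r => (hF j r).1.to_subtype
  set A : ℝ≥0∞ := (ENNReal.ofReal c ^ 3) ^ 2 * ENNReal.ofReal (2 ^ (p - n)) with hA
  have hAtop : A ≠ ∞ := ENNReal.mul_ne_top
    (ENNReal.pow_ne_top (ENNReal.pow_ne_top ENNReal.ofReal_ne_top)) ENNReal.ofReal_ne_top
  have hwtop : ∀ j, A * ENNReal.ofReal (d j ^ (-p)) ≠ ∞ := fun j =>
    ENNReal.mul_ne_top hAtop ENNReal.ofReal_ne_top
  let ι := Σ jr : ℕ × (Fin n → ZMod 8), F jr.1 jr.2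
  let G : ι → (Fin n → ℝ) → (Fin n → ℝ) → ℝ≥0∞ := fun i x y =>
    (A * ENNReal.ofReal (d i.1.1 ^ (-p))) * cubeKernel μ p f ⟨i.2, 3 * d i.1.1 / 2⟩ x y
  have hpt : ∀ᵐ x ∂μ, ∀ y, (if rho α S x y < ENNReal.ofReal ε then
      kern μ p α S f x y * rho α S x y ^ ((n : ℝ) - p) else 0) ≤ ∑' i, G i x y := by
    filter_upwards [ae_mem_of_isSuppOn hμ] with x hx y
    by_cases hε : rho α S x y < ENNReal.ofReal ε
    swap
    · rw [if_neg hε]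
      exact zero_le
    by_cases hfxy : f x = f y
    · rw [kern_eq_zero hp0 hfxy]
      simp
    rw [if_pos hε]
    have h0 : 0 < rho α S x y := rho_pos (fun h => hfxy (by rw [h]))
    have htop : rho α S x y ≠ ∞ := (hε.trans ENNReal.ofReal_lt_top).ne
    have hs0 : 0 < (rho α S x y).toReal := ENNReal.toReal_pos h0.ne' htop
    have hsε : (rho α S x y).toReal < ε := (ENNReal.lt_ofReal_iff_toReal_lt htop).1 hε
    obtain ⟨j, hj⟩ := mem_iUnion.1 (iUnion_dyadic hε0 ⟨hs0, hsε⟩)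
    have h1 : rho α S x y < ENNReal.ofReal (d j) := (ENNReal.lt_ofReal_iff_toReal_lt htop).2 hj.2
    have h2 : ENNReal.ofReal (d j / 2) ≤ rho α S x y := by
      rw [ENNReal.ofReal_le_iff_le_toReal htop]
      refine le_trans (le_of_eq ?_) hj.1
      simp only [hd_def, pow_succ]
      ring
    obtain ⟨z, hz, hpor, hxz, hyz⟩ := exists_porous_cube hα0 hα1 hS hx h1 h2
    obtain ⟨r, z', hz', hzz'⟩ := hcov j z ⟨hz, hpor⟩
    refine le_trans ?_ (ENNReal.le_tsum (⟨(j, r), ⟨z', hz'⟩⟩ : ι))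
    -- `d + d / 2 = 3 * d / 2` is the radius of the cube around `z'`
    exact integrand_le_cubeKernel hp (hdpos j) (hdle j) hc hd f hx h1 h2
      (by linarith [dist_triangle x z z']) (by linarith [dist_triangle y z z'])
  have hGm : ∀ i x, Measurable (G i x) := fun i x =>
    ((measurable_cubeKernel μ p hf _).comp measurable_prodMk_left).const_mul _
  have hGm2 : ∀ i, Measurable fun x => ∫⁻ y, G i x y ∂μ := by
    intro i
    simp only [G, lintegral_const_mul' _ _ (hwtop _)]
    exact (measurable_lintegral_cubeKernel μ p hf _).const_mul _
  rw [I2_eq hμ]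
  calc _ ≤ ∫⁻ x, ∫⁻ y, ∑' i, G i x y ∂μ ∂μ :=
        lintegral_mono_ae (hpt.mono fun x hx => lintegral_mono (hx))
    _ = ∑' i, ∫⁻ x, ∫⁻ y, G i x y ∂μ ∂μ := by
        rw [← lintegral_tsum fun i => (hGm2 i).aemeasurable]
        exact lintegral_congr fun x => lintegral_tsum fun i => (hGm i x).aemeasurable
    _ = ∑' i : ι, (A * ENNReal.ofReal (d i.1.1 ^ (-p))) *
          cubeTerm μ p f ⟨i.2, 3 * d i.1.1 / 2⟩ :=
        tsum_congr fun i => lintegral_lintegral_cubeKernel μ p f _ (hwtop _)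
    _ = ∑' jr : ℕ × (Fin n → ZMod 8), (A * ENNReal.ofReal (d jr.1 ^ (-p))) *
          ∑' z : F jr.1 jr.2, cubeTerm μ p f ⟨z, 3 * d jr.1 / 2⟩ := by
        rw [ENNReal.tsum_sigma']
        exact tsum_congr fun jr => ENNReal.tsum_mul_left
          (a := A * ENNReal.ofReal (d jr.1 ^ (-p)))
          (f := fun z : F jr.1 jr.2 => cubeTerm μ p f ⟨z, 3 * d jr.1 / 2⟩)
    _ ≤ ∑' jr : ℕ × (Fin n → ZMod 8), (A * ENNReal.ofReal (d jr.1 ^ (-p))) *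
          AcalLp μ p (α / 8) f (3 * d jr.1) S ^ p := by
        refine ENNReal.tsum_le_tsum fun jr => mul_le_mul' le_rfl ?_
        exact tsum_cubeTerm_le hp0 (hdpos _) f (hF jr.1 jr.2).2.1 (hF jr.1 jr.2).2.2
    _ = ∑' j : ℕ, 8 ^ n * (A * ENNReal.ofReal (d j ^ (-p)) *
          AcalLp μ p (α / 8) f (3 * d j) S ^ p) := by
        rw [ENNReal.tsum_prod']
        refine tsum_congr fun j => ?_
        dsimp only
        rw [tsum_fintype, Finset.sum_const, Finset.card_univ, nsmul_eq_mul]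
        simp
    _ ≤ ∑' j : ℕ, (A * 8 ^ n * ENNReal.ofReal (4 ^ (p + 1))) *
          ∫⁻ t in Set.Ico (3 * d j) (4 * d j),
            AcalLp μ p (α / 8) f t S ^ p * ENNReal.ofReal (t ^ (-p - 1)) := by
        refine ENNReal.tsum_le_tsum fun j => ?_
        have := rpow_mul_AcalLp_le μ (α / 8) hp0 (hdpos j) f S
        calc _ = A * 8 ^ n * (ENNReal.ofReal (d j ^ (-p)) *
              AcalLp μ p (α / 8) f (3 * d j) S ^ p) := by ring
          _ ≤ _ := by
              rw [mul_assoc (A * 8 ^ n)]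
              gcongr
    _ ≤ _ := by
        rw [ENNReal.tsum_mul_left]
        gcongr
        exact tsum_setLIntegral_dyadic_le hε0 _

/-! ### Replacing `f` by a measurable function -/

lemma I2_congr {n : ℕ} {μ : Measure (Fin n → ℝ)} {p α δ : ℝ} {S : Set (Fin n → ℝ)}
    (h : IsSuppOn μ S) {f g : (Fin n → ℝ) → ℝ} (hfg : ∀ x ∈ S, f x = g x) :
    I2 μ p α S f δ = I2 μ p α S g δ := by
  rw [I2_eq h, I2_eq h]
  have hae := ae_mem_of_isSuppOn h
  refine lintegral_congr_ae (hae.mono fun x hx => lintegral_congr_ae (hae.mono fun y hy => ?_))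
  simp only [kern, hfg x hx, hfg y hy]

lemma AcalLp_congr {n : ℕ} {μ : Measure (Fin n → ℝ)} {p α t : ℝ} {S : Set (Fin n → ℝ)}
    (h : IsSuppOn μ S) {f g : (Fin n → ℝ) → ℝ} (hfg : ∀ x ∈ S, f x = g x) :
    AcalLp μ p α f t S = AcalLp μ p α g t S := by
  have : ∀ Q, oscLp μ p f Q = oscLp μ p g Q := by
    intro Q
    have hae := ae_restrict_of_ae (s := Q.toSet) (ae_mem_of_isSuppOn h)
    rw [oscLp, oscLp]
    congr 2
    refine lintegral_congr_ae (hae.mono fun x hx => lintegral_congr_ae (hae.mono fun y hy => ?_))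
    simp only [hfg x hx, hfg y hy]
  simp only [AcalLp, this]

lemma measurable_indicator_of_continuousOn {n : ℕ} {S : Set (Fin n → ℝ)} (hS : IsClosed S)
    {f : (Fin n → ℝ) → ℝ} (hf : ContinuousOn f S) : Measurable (S.indicator f) := by
  classical
  rw [← Set.piecewise_eq_indicator]
  exact hf.measurable_piecewise continuousOn_const hS.measurableSet

theorem statement11 (n : ℕ) (p α ε cμ : ℝ) (hp : (n : ℝ) < p)
    (hα0 : 0 < α) (hα1 : α < 1) (hε0 : 0 < ε) (hε1 : ε ≤ 1 / 4) :
    ∃ C : ℝ, 1 ≤ C ∧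
      ∀ S : Set (Fin n → ℝ), S.Nonempty → IsClosed S →
        ∀ μ : Measure (Fin n → ℝ), IsSuppOn μ S → Doubling μ S cμ →
          ∀ f : (Fin n → ℝ) → ℝ, ContinuousOn f S →
            (ENNReal.ofReal C)⁻¹ *
                (∫⁻ t in Set.Ioo (0 : ℝ) (α * ε),
                  AcalLp μ p (2 * α) f t S ^ p * ENNReal.ofReal (t ^ (-p - 1)))
              ≤ I2 μ p α S f ε ∧
            I2 μ p α S f ε
              ≤ ENNReal.ofReal C *
                  ∫⁻ t in Set.Ioo (0 : ℝ) (4 * ε),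
                    AcalLp μ p (α / 8) f t S ^ p * ENNReal.ofReal (t ^ (-p - 1)) := by
  -- enlarging the doubling constant to be at least `1` makes it invertible in `ℝ≥0∞`
  set c := max cμ 1 with hc_def
  have hc : 1 ≤ c := le_max_right _ _
  set C₁ : ℝ≥0∞ := (ENNReal.ofReal c ^ 3) ^ 2 * ENNReal.ofReal (2 ^ p) *
    ENNReal.ofReal ((1 - 2 ^ (-(p - n)))⁻¹ * 2 ^ (p - n)) with hC₁
  set C₂ : ℝ≥0∞ := (ENNReal.ofReal c ^ 3) ^ 2 * ENNReal.ofReal (2 ^ (p - n)) * 8 ^ n *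
    ENNReal.ofReal (4 ^ (p + 1)) with hC₂
  have hc6 : (ENNReal.ofReal c ^ 3) ^ 2 ≠ ∞ :=
    ENNReal.pow_ne_top (ENNReal.pow_ne_top ENNReal.ofReal_ne_top)
  have h1top : C₁ ≠ ∞ :=
    ENNReal.mul_ne_top (ENNReal.mul_ne_top hc6 ENNReal.ofReal_ne_top) ENNReal.ofReal_ne_top
  have h2top : C₂ ≠ ∞ :=
    ENNReal.mul_ne_top (ENNReal.mul_ne_top (ENNReal.mul_ne_top hc6 ENNReal.ofReal_ne_top)
      (ENNReal.pow_ne_top (by norm_num))) ENNReal.ofReal_ne_top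
  set C : ℝ := max 1 (max C₁.toReal C₂.toReal) with hC_def
  have hC1 : 1 ≤ C := le_max_left _ _
  have hC₁C : C₁ ≤ ENNReal.ofReal C := by
    rw [← ENNReal.ofReal_toReal h1top]
    exact ENNReal.ofReal_le_ofReal ((le_max_left _ _).trans (le_max_right _ _))
  have hC₂C : C₂ ≤ ENNReal.ofReal C := by
    rw [← ENNReal.ofReal_toReal h2top]
    exact ENNReal.ofReal_le_ofReal ((le_max_right _ _).trans (le_max_right _ _))
  refine ⟨C, hC1, fun S _ hS μ hμ hd f hf => ?_⟩
  have hd' : Doubling μ S c := fun x hx r hr hr2 => (hd x hx r hr hr2).trans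
    (mul_le_mul' (ENNReal.ofReal_le_ofReal (le_max_left _ _)) le_rfl)
  constructor
  · have h0 : ENNReal.ofReal C ≠ 0 := (ENNReal.ofReal_pos.2 (by linarith)).ne'
    rw [ENNReal.inv_mul_le_iff h0 ENNReal.ofReal_ne_top]
    exact (lower_estimate hp hα0 hε0 hε1 hS hμ hc hd' f).trans (mul_le_mul' hC₁C le_rfl)
  · -- only the values of `f` on `S` matter, and the extension by zero is Borel measurable
    have hfg : ∀ x ∈ S, f x = S.indicator f x := fun x hx => (Set.indicator_of_mem hx f).symm
    rw [I2_congr hμ hfg]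
    simp only [AcalLp_congr hμ hfg]
    exact (upper_estimate hp hα0 hα1 hε0 hε1 hS hμ hc hd'
      (measurable_indicator_of_continuousOn hS hf)).trans (mul_le_mul' hC₂C le_rfl)
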